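/- Let F be a field of characteristic 0 and let R be a finitely generated F-algebra satisfying a nonzero polynomial identity. Then there exists an integer m ≥ 1 such that R satisfies the Capelli identity C_m: for all elements y_0, y_1, …, y_m and x_1, …, x_m of R, Σ_{σ ∈ S_m} sgn(σ) · y_0 x_{σ(1)} y_1 x_{σ(2)} y_2 ⋯ y_{m−1} x_{σ(m)} y_m = 0. (Kemer: every finitely generated PI algebra satisfies a Capelli identity.) -/

import Mathlib

/-! A nonzero identity linearizes to `∑ σ, α σ • x_{σ(1)} ⋯ x_{σ(k)} = 0`, normalized so that
`α 1 ≠ 0`. Used to rewrite words lexicographically downwards, it leaves only those permutations of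
`n` letters without a decreasing subsequence of length `k`, of which there are at most `(k²)ⁿ`.
For large `d` this exponential bound (with `n = 3 d + 1`) is beaten by `d!`, so the `d!` generic
values `C_d(h₁ t_{ρ(1)}, …, h_d t_{ρ(d)}; y)` are linearly dependent: this is an identity expressing
the value at `ρ = 1` through those in which the right factors `t_i` have been exchanged.

In `C_m(w₁, …, w_m; y)` with words `w_i` in the generators, suppose that `d` of the words have
length at least `d`. They can be cut as `w_i = h_i t_i` with `|h_i|` increasing and `|t_i|`
decreasing, and by the rearrangement inequality every nontrivial exchange of the tails increases
`∑ |w_i|²` while preserving `∑ |w_i|`. Hence such a value vanishes by induction. Otherwise fewer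
than `d` words are long, and if `m` is large two of the short ones coincide, so that the alternating
map `C_m` vanishes. -/

section Multilinearization

variable {F R : Type*} [CommRing F] [Ring R] [Algebra F R]

/-- The algebra `R` satisfies the multilinear identity
`∑ σ, α σ • x_{σ(1)} x_{σ(2)} ⋯ x_{σ(k)} = 0`. -/
def IsMultilinearIdentity {F : Type*} (R : Type*) [CommRing F] [Ring R] [Algebra F R] {k : ℕ}
    (α : Equiv.Perm (Fin k) → F) : Prop :=
  ∀ x : Fin k → R, ∑ σ, α σ • (List.ofFn (x ∘ σ)).prod = 0

theorem IsMultilinearIdentity.pi {k : ℕ} {α : Equiv.Perm (Fin k) → F}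
    (h : IsMultilinearIdentity R α) (A : Type*) : IsMultilinearIdentity (A → R) α := by
  intro x
  funext a
  have hprod (l : List (A → R)) : l.prod a = (l.map fun g ↦ g a).prod :=
    map_list_prod (Pi.evalRingHom (fun _ : A ↦ R) a) l
  simpa [hprod, List.map_ofFn, Function.comp_def] using h fun i ↦ x i a

theorem freeAlgebra_lift_eq_sum {X : Type*} (f : FreeAlgebra F X) (a : X → R) :
    FreeAlgebra.lift F a f = (FreeAlgebra.equivMonoidAlgebraFreeMonoid f).coeff.sum
      fun u r ↦ r • (u.toList.map a).prod := by
  have hlift : FreeAlgebra.lift F a =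
      (MonoidAlgebra.lift F R (FreeMonoid X) (FreeMonoid.lift a)).comp
        (FreeAlgebra.equivMonoidAlgebraFreeMonoid (R := F) (X := X)).toAlgHom := by
    ext i
    simp [FreeAlgebra.equivMonoidAlgebraFreeMonoid]
  rw [hlift]
  change MonoidAlgebra.lift F R (FreeMonoid X) (FreeMonoid.lift a)
    (FreeAlgebra.equivMonoidAlgebraFreeMonoid f) = _
  simp only [MonoidAlgebra.lift_apply, FreeMonoid.lift_apply]

-- Inclusion–exclusion over `S`, the set of indices that are left out.
theorem sum_neg_one_pow_card_smul_prod_ofFn_sum_compl {ι : Type*} [Fintype ι] [DecidableEq ι]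
    {q : ℕ} (A : Fin q → ι → R) :
    ∑ S : Finset ι, (-1 : ℤ) ^ S.card • (List.ofFn fun p ↦ ∑ i ∈ Sᶜ, A p i).prod =
      ∑ r : Fin q → ι with Function.Surjective r, (List.ofFn fun p ↦ A p (r p)).prod := by
  have expand (S : Finset ι) : (List.ofFn fun p ↦ ∑ i ∈ Sᶜ, A p i).prod =
      ∑ r : Fin q → ι, if S ⊆ (Finset.univ.image r)ᶜ then
        (List.ofFn fun p ↦ A p (r p)).prod else 0 := by
    have h := (MultilinearMap.mkPiAlgebraFin ℤ q R).map_sum_finset A fun _ ↦ Sᶜ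
    simp only [MultilinearMap.mkPiAlgebraFin_apply] at h
    rw [h, ← Finset.sum_filter]
    congr 1
    ext r
    simp [Fintype.mem_piFinset, Finset.subset_compl_comm (s := S), Finset.image_subset_iff]
  have signs (r : Fin q → ι) : ∑ S ∈ ((Finset.univ.image r)ᶜ).powerset, (-1 : ℤ) ^ S.card =
      if Function.Surjective r then 1 else 0 := by
    rw [Finset.sum_powerset_neg_one_pow_card]
    exact if_congr (by simp [Finset.eq_univ_iff_forall, Function.Surjective]) rfl rfl
  simp only [expand, Finset.smul_sum]
  rw [Finset.sum_comm, Finset.sum_filter]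
  refine Finset.sum_congr rfl fun r _ ↦ ?_
  simp only [smul_ite, smul_zero]
  rw [← Finset.sum_filter, ← Finset.sum_smul, Finset.filter_subset_univ, signs r]
  split_ifs <;> simp

theorem sum_neg_one_pow_card_smul_prod_map {X : Type*} [DecidableEq X] {k : ℕ} (w : Fin k → X)
    (x : Fin k → R) (u : List X) (hu : u.length ≤ k) :
    ∑ S : Finset (Fin k), (-1 : ℤ) ^ S.card •
        (u.map fun j ↦ ∑ i ∈ Sᶜ, if w i = j then x i else 0).prod =
      ∑ σ with List.ofFn (w ∘ ⇑(σ : Equiv.Perm (Fin k))) = u, (List.ofFn (x ∘ σ)).prod := by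
  obtain ⟨q, u, rfl⟩ : ∃ q, ∃ u' : Fin q → X, u = List.ofFn u' :=
    ⟨u.length, u.get, (List.ofFn_get u).symm⟩
  simp only [List.map_ofFn, Function.comp_def, List.length_ofFn] at hu ⊢
  rw [sum_neg_one_pow_card_smul_prod_ofFn_sum_compl fun p i ↦ if w i = u p then x i else 0]
  obtain hlt | rfl := hu.lt_or_eq
  · rw [Finset.filter_false_of_mem, Finset.filter_false_of_mem]
    · rfl
    · intro σ _ h
      exact hlt.ne' (by simpa using congrArg List.length h)
    · intro r _ h
      exact hlt.not_ge (by simpa using Fintype.card_le_of_surjective r h)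
  symm
  refine Finset.sum_of_injOn (fun σ ↦ ⇑σ) DFunLike.coe_injective.injOn ?_ ?_ ?_
  · intro σ _
    simpa using σ.surjective
  · intro r hr hr'
    have hbij := Finite.surjective_iff_bijective.mp (Finset.mem_filter.mp hr).2
    obtain ⟨p, hp⟩ : ∃ p, w (r p) ≠ u p := by
      by_contra! hall
      exact hr' ⟨Equiv.ofBijective r hbij, by simp [hall], rfl⟩
    exact List.prod_eq_zero (List.mem_ofFn.mpr ⟨p, if_neg hp⟩)
  · intro σ hσ
    have hu : (fun i ↦ w (σ i)) = u := List.ofFn_injective (Finset.mem_filter.mp hσ).2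
    simp [← hu]

theorem exists_isMultilinearIdentity {X : Type*} {f : FreeAlgebra F X} (hf : f ≠ 0)
    (hR : ∀ a : X → R, FreeAlgebra.lift F a f = 0) :
    ∃ (k : ℕ) (α : Equiv.Perm (Fin k) → F), α 1 ≠ 0 ∧ IsMultilinearIdentity R α := by
  classical
  set g := (FreeAlgebra.equivMonoidAlgebraFreeMonoid f).coeff with hg
  have hg0 : g.support.Nonempty := by
    rw [Finsupp.support_nonempty_iff, hg]
    simpa using hf
  obtain ⟨w, hw, hmax⟩ := g.support.exists_max_image (fun u ↦ u.toList.length) hg0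
  set k := w.toList.length
  refine ⟨k, fun σ ↦ g (FreeMonoid.ofList (List.ofFn (w.toList.get ∘ σ))), ?_, fun x ↦ ?_⟩
  · simpa [List.ofFn_get] using hw
  · have key : ∑ S : Finset (Fin k), (-1 : ℤ) ^ S.card • FreeAlgebra.lift F
        (fun j ↦ ∑ i ∈ Sᶜ, if w.toList.get i = j then x i else 0) f = 0 := by simp [hR]
    simp only [freeAlgebra_lift_eq_sum, ← hg, Finsupp.sum, Finset.smul_sum] at key
    rw [Finset.sum_comm] at key
    rw [← key]
    have collect (u : FreeMonoid X) (hu : u ∈ g.support) :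
        ∑ S : Finset (Fin k), (-1 : ℤ) ^ S.card • g u • (u.toList.map
          fun j ↦ ∑ i ∈ Sᶜ, if w.toList.get i = j then x i else 0).prod =
        ∑ σ : Equiv.Perm (Fin k), if FreeMonoid.ofList (List.ofFn (w.toList.get ∘ σ)) = u then
          g u • (List.ofFn (x ∘ σ)).prod else 0 := by
      simp only [smul_comm _ (g u)]
      rw [← Finset.smul_sum, sum_neg_one_pow_card_smul_prod_map _ _ _ (hmax u hu),
        Finset.smul_sum, Finset.sum_filter]
      exact Finset.sum_congr rfl fun σ _ ↦ if_congr Iff.rfl rfl rfl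
    rw [Finset.sum_congr rfl collect, Finset.sum_comm]
    refine Finset.sum_congr rfl fun σ _ ↦ ?_
    rw [Finset.sum_ite_eq]
    split_ifs with h
    · rfl
    · beta_reduce
      rw [Finsupp.notMem_support_iff.mp h, zero_smul]

end Multilinearization

section DecreasingSublists

variable {ι : Type*}

/-- The word obtained by concatenating blocks, a block being a head letter followed by a tail. -/
def joinBlocks (bl : List (ι × List ι)) : List ι :=
  bl.flatMap fun p ↦ p.1 :: p.2

theorem exists_eq_append_joinBlocks {s l : List ι} (h : s.Sublist l) :
    ∃ (l₀ : List ι) (bl : List (ι × List ι)), bl.map Prod.fst = s ∧ l = l₀ ++ joinBlocks bl := by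
  induction h with
  | slnil => exact ⟨[], [], rfl, rfl⟩
  | cons a _ ih =>
    obtain ⟨l₀, bl, hs, hl⟩ := ih
    exact ⟨a :: l₀, bl, hs, by simp [hl]⟩
  | cons_cons a _ ih =>
    obtain ⟨l₀, bl, hs, hl⟩ := ih
    exact ⟨[], (a, l₀) :: bl, by simp [hs], by simp [hl, joinBlocks]⟩

theorem prod_map_joinBlocks {M : Type*} [Monoid M] (X : ι → M) (bl : List (ι × List ι)) :
    ((joinBlocks bl).map X).prod = (bl.map fun p ↦ X p.1 * (p.2.map X).prod).prod := by
  simp [joinBlocks, List.flatMap, List.map_flatten, List.prod_flatten, Function.comp_def]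

variable [LinearOrder ι]

theorem joinBlocks_lex_of_perm {bl bl' : List (ι × List ι)}
    (hbl : (bl.map Prod.fst).Pairwise (· > ·)) (hp : bl'.Perm bl) (hne : bl' ≠ bl) :
    List.Lex (· < ·) (joinBlocks bl') (joinBlocks bl) := by
  induction bl generalizing bl' with
  | nil => exact absurd hp.eq_nil hne
  | cons a bl ih =>
    cases bl' with
    | nil => exact absurd hp.symm.eq_nil (List.cons_ne_nil a bl)
    | cons b bl' =>
      rw [List.map_cons, List.pairwise_cons] at hbl
      obtain rfl | hb := List.mem_cons.mp (hp.subset List.mem_cons_self)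
      · have hlex := ih hbl.2 ((List.perm_cons b).mp hp) (by rintro rfl; exact hne rfl)
        exact List.Lex.append_left _ hlex (b.1 :: b.2)
      · exact List.Lex.rel (hbl.1 _ (List.mem_map_of_mem hb))

/-- Every decreasing subsequence of the word `l` is shorter than `k`. -/
def AvoidsDecreasing (k : ℕ) (l : List ι) : Prop :=
  ∀ s : List ι, s.Sublist l → s.Pairwise (· > ·) → s.length < k

theorem exists_strictAnti_blocks_of_not_avoidsDecreasing {k : ℕ} {l : List ι}
    (hl : ¬ AvoidsDecreasing k l) :
    ∃ (l₀ : List ι) (b : Fin k → ι × List ι),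
      StrictAnti (fun i ↦ (b i).1) ∧ l = l₀ ++ joinBlocks (List.ofFn b) := by
  unfold AvoidsDecreasing at hl
  push Not at hl
  obtain ⟨s, hsl, hs, hk⟩ := hl
  obtain ⟨l₀, bl, hbl, rfl⟩ := exists_eq_append_joinBlocks ((List.take_sublist k s).trans hsl)
  obtain rfl : bl.length = k := by simpa [hk] using congrArg List.length hbl
  refine ⟨l₀, bl.get, ?_, by rw [List.ofFn_get]⟩
  have hdec : (bl.map Prod.fst).Pairwise (· > ·) := hbl ▸ hs.sublist (List.take_sublist _ s)
  intro i j hij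
  exact List.pairwise_iff_get.mp (List.pairwise_map.mp hdec) i j hij

theorem shortlex_append_joinBlocks_comp_perm {k : ℕ} (l₀ : List ι) {b : Fin k → ι × List ι}
    (hb : StrictAnti fun i ↦ (b i).1) {σ : Equiv.Perm (Fin k)} (hσ : σ ≠ 1) :
    List.Shortlex (· < ·) (l₀ ++ joinBlocks (List.ofFn (b ∘ σ)))
      (l₀ ++ joinBlocks (List.ofFn b)) := by
  have hperm := Equiv.Perm.ofFn_comp_perm σ b
  have hinj : Function.Injective b := fun i j h ↦ hb.injective (congrArg Prod.fst h)
  have hne : List.ofFn (b ∘ σ) ≠ List.ofFn b := fun h ↦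
    hσ (Equiv.ext fun i ↦ hinj (congrFun (List.ofFn_injective h) i))
  have hdec : ((List.ofFn b).map Prod.fst).Pairwise (· > ·) := by
    rw [List.map_ofFn, List.pairwise_ofFn]
    exact fun i j hij ↦ hb hij
  exact List.Shortlex.of_lex ((hperm.flatMap_right _).append_left l₀).length_eq
    (List.Lex.append_left _ (joinBlocks_lex_of_perm hdec hperm hne) l₀)

end DecreasingSublists

theorem mem_of_sum_smul_mem {F M κ : Type*} [DivisionRing F] [AddCommGroup M] [Module F M]
    [Fintype κ] {N : Submodule F M} {c : κ → F} {x : κ → M} {i : κ} (hc : c i ≠ 0)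
    (hsum : ∑ j, c j • x j ∈ N) (hx : ∀ j, j ≠ i → x j ∈ N) : x i ∈ N := by
  classical
  rw [← Finset.add_sum_erase _ _ (Finset.mem_univ i)] at hsum
  have hrest : ∑ j ∈ Finset.univ.erase i, c j • x j ∈ N :=
    N.sum_mem fun j hj ↦ N.smul_mem _ (hx j (Finset.ne_of_mem_erase hj))
  exact (N.smul_mem_iff hc).mp ((N.add_mem_iff_left hrest).mp hsum)

section Spanning

theorem IsMultilinearIdentity.sum_smul_prod_map_joinBlocks {F B ι : Type*} [CommRing F] [Ring B]
    [Algebra F B] {k : ℕ} {α : Equiv.Perm (Fin k) → F} (h : IsMultilinearIdentity B α)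
    (X : ι → B) (l₀ : List ι) (b : Fin k → ι × List ι) :
    ∑ σ, α σ • ((l₀ ++ joinBlocks (List.ofFn (b ∘ σ))).map X).prod = 0 := by
  have hblocks := h fun j ↦ X (b j).1 * ((b j).2.map X).prod
  simp only [List.map_append, List.prod_append, prod_map_joinBlocks, List.map_ofFn,
    ← mul_smul_comm, ← Finset.mul_sum]
  exact (congrArg _ hblocks).trans (mul_zero _)

variable {F B ι : Type*} [Field F] [Ring B] [Algebra F B]
  {k : ℕ} {α : Equiv.Perm (Fin k) → F}

-- The identity, applied to the blocks headed by the letters of a decreasing subsequence, rewrites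
-- a word through rearrangements of it that are lexicographically smaller.
theorem IsMultilinearIdentity.prod_map_mem_span [LinearOrder ι] [WellFoundedLT ι]
    (h : IsMultilinearIdentity B α) (hα : α 1 ≠ 0) (X : ι → B) (l : List ι) :
    (l.map X).prod ∈ Submodule.span F
      ((fun l' ↦ (l'.map X).prod) '' {l' | l'.Perm l ∧ AvoidsDecreasing k l'}) := by
  induction l using (List.Shortlex.wf (α := ι) wellFounded_lt).induction with
  | _ l ih =>
  by_cases hl : AvoidsDecreasing k l
  · exact Submodule.subset_span ⟨l, ⟨List.Perm.refl l, hl⟩, rfl⟩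
  obtain ⟨l₀, b, hb, rfl⟩ := exists_strictAnti_blocks_of_not_avoidsDecreasing hl
  refine mem_of_sum_smul_mem (c := α) (i := 1)
    (x := fun σ ↦ ((l₀ ++ joinBlocks (List.ofFn (b ∘ σ))).map X).prod) hα ?_ fun σ hσ ↦ ?_
  · rw [h.sum_smul_prod_map_joinBlocks X l₀ b]
    exact Submodule.zero_mem _
  · have hperm : (l₀ ++ joinBlocks (List.ofFn (b ∘ σ))).Perm (l₀ ++ joinBlocks (List.ofFn b)) :=
      ((Equiv.Perm.ofFn_comp_perm σ b).flatMap_right _).append_left l₀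
    refine Submodule.span_mono (Set.image_mono ?_)
      (ih _ (shortlex_append_joinBlocks_comp_perm l₀ hb hσ))
    exact fun l' hl' ↦ ⟨hl'.1.trans hperm, hl'.2⟩

end Spanning

section Counting

theorem cons_sublist_of_pair_sublist {ι : Type*} {l s : List ι} {a b : ι} (hl : l.Nodup)
    (hab : [a, b].Sublist l) (hbs : (b :: s).Sublist l) : (a :: b :: s).Sublist l := by
  induction l with
  | nil => simp at hbs
  | cons x l ih =>
    obtain ⟨hx, hl⟩ := List.nodup_cons.mp hl
    have hbl : b ∈ l := by
      cases hab with
      | cons _ h => exact h.subset (by simp)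
      | cons_cons _ h => exact h.subset (by simp)
    have hbs' : (b :: s).Sublist l := by
      cases hbs with
      | cons _ h => exact h
      | cons_cons _ _ => exact absurd hbl hx
    cases hab with
    | cons _ h => exact (ih hl h hbs').cons x
    | cons_cons _ _ => exact hbs'.cons_cons a

variable {ι : Type*} [LinearOrder ι]

open Classical in
/-- One less than the greatest length of a decreasing subsequence of `l` that starts with `a`
(and `0` if there is none). -/
noncomputable def decreasingRank (l : List ι) (a : ι) : ℕ :=
  {s ∈ l.sublists.toFinset | (a :: s).Sublist l ∧ (a :: s).Pairwise (· > ·)}.sup List.length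

theorem length_le_decreasingRank {l s : List ι} {a : ι} (hs : (a :: s).Sublist l)
    (hdec : (a :: s).Pairwise (· > ·)) : s.length ≤ decreasingRank l a :=
  Finset.le_sup (f := List.length)
    (by simp [hs, hdec, (List.sublist_cons_self a s).trans hs, -List.pairwise_cons])

theorem exists_length_eq_decreasingRank {l : List ι} {a : ι} (ha : a ∈ l) :
    ∃ s, (a :: s).Sublist l ∧ (a :: s).Pairwise (· > ·) ∧ s.length = decreasingRank l a := by
  classical
  obtain ⟨s, hs, hlen⟩ := Finset.exists_mem_eq_sup
    {s ∈ l.sublists.toFinset | (a :: s).Sublist l ∧ (a :: s).Pairwise (· > ·)}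
    ⟨[], by simp [ha]⟩ List.length
  obtain ⟨-, hsub, hdec⟩ := Finset.mem_filter.mp hs
  refine ⟨s, hsub, hdec, hlen.symm.trans ?_⟩
  unfold decreasingRank
  congr!

theorem decreasingRank_lt {l : List ι} (hl : l.Nodup) {a b : ι} (hab : [a, b].Sublist l)
    (hlt : b < a) : decreasingRank l b < decreasingRank l a := by
  obtain ⟨s, hsub, hdec, hlen⟩ := exists_length_eq_decreasingRank (hab.subset (by simp) : b ∈ l)
  rw [← hlen, Nat.lt_iff_add_one_le]
  refine length_le_decreasingRank (cons_sublist_of_pair_sublist hl hab hsub)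
    (List.pairwise_cons.mpr ⟨?_, hdec⟩)
  rintro x (_ | ⟨_, hx⟩)
  · exact hlt
  · exact (List.rel_of_pairwise_cons hdec hx).trans hlt

theorem AvoidsDecreasing.exists_coloring {k : ℕ} {l : List ι} (h : AvoidsDecreasing k l)
    (hl : l.Nodup) (hmem : ∀ a, a ∈ l) :
    ∃ c : ι → Fin k, l.Pairwise fun a b ↦ c a = c b → a < b := by
  have hrank (a : ι) : decreasingRank l a < k := by
    obtain ⟨s, hsub, hdec, hlen⟩ := exists_length_eq_decreasingRank (hmem a)
    have := h _ hsub hdec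
    simp only [List.length_cons] at this
    omega
  refine ⟨fun a ↦ ⟨decreasingRank l a, hrank a⟩, List.pairwise_iff_forall_sublist.mpr ?_⟩
  intro a b hab heq
  have hne : a ≠ b := by simpa using hl.sublist hab
  by_contra hlt
  exact (decreasingRank_lt hl hab (hne.lt_of_le' (not_lt.mp hlt))).ne (congrArg Fin.val heq).symm

theorem eq_of_map_eq_of_filter_eq {ι κ : Type*} [DecidableEq κ] (c : ι → κ) {l l' : List ι}
    (hmap : l.map c = l'.map c)
    (hfilter : ∀ j, l.filter (fun a ↦ c a = j) = l'.filter (fun a ↦ c a = j)) : l = l' := by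
  induction l generalizing l' with
  | nil => simpa using hmap.symm
  | cons a l ih =>
    cases l' with
    | nil => simp at hmap
    | cons b l' =>
      simp only [List.map_cons, List.cons.injEq] at hmap
      obtain ⟨rfl, -⟩ : a = b ∧ _ := by simpa [← hmap.1] using hfilter (c a)
      refine congrArg (a :: ·) (ih hmap.2 fun j ↦ ?_)
      have := hfilter j
      simp only [List.filter_cons] at this
      split_ifs at this
      · exact (List.cons.inj this).2
      · exact this

-- A permutation is determined by its colouring together with the sequence of colours it displays:
-- each colour class occurs in increasing order.
theorem injOn_coloring [Fintype ι] {κ : Type*} :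
    {p : (ι → κ) × List ι | p.2.Perm Finset.univ.toList ∧
      p.2.Pairwise fun a b ↦ p.1 a = p.1 b → a < b}.InjOn fun p ↦ (p.1, p.2.map p.1) := by
  classical
  rintro ⟨c, l⟩ ⟨hl, hc⟩ ⟨c', l'⟩ ⟨hl', hc'⟩ h
  obtain ⟨rfl, hmap⟩ : c = c' ∧ _ := Prod.mk.inj h
  refine Prod.ext rfl (eq_of_map_eq_of_filter_eq c hmap fun j ↦ ?_)
  have hsorted {l : List ι} (hc : l.Pairwise fun a b ↦ c a = c b → a < b) :
      (l.filter (fun a ↦ c a = j)).Pairwise (· < ·) := by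
    rw [List.pairwise_filter]
    refine hc.imp fun hab ha hb ↦ hab ?_
    rw [of_decide_eq_true ha, of_decide_eq_true hb]
  exact ((hl.trans hl'.symm).filter _).eq_of_pairwise' (hsorted hc) (hsorted hc')

theorem ncard_avoidsDecreasing_le [Fintype ι] (k : ℕ) :
    {l : List ι | l.Perm Finset.univ.toList ∧ AvoidsDecreasing k l}.ncard ≤
      (k ^ 2) ^ Fintype.card ι := by
  have hcol : ∀ l : {l : List ι | l.Perm Finset.univ.toList ∧ AvoidsDecreasing k l},
      ∃ c : ι → Fin k, l.1.Pairwise fun a b ↦ c a = c b → a < b := fun ⟨l, hl, hk⟩ ↦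
    hk.exists_coloring (hl.nodup_iff.mpr (Finset.nodup_toList _)) fun a ↦ by simp [hl.mem_iff]
  choose c hc using hcol
  let code (l : {l : List ι | l.Perm Finset.univ.toList ∧ AvoidsDecreasing k l}) :
      (ι → Fin k) × List.Vector (Fin k) (Fintype.card ι) :=
    (c l, ⟨l.1.map (c l), by simp [l.2.1.length_eq]⟩)
  have hcode : Function.Injective code := by
    intro l l' h
    have h := Prod.mk.inj h
    exact Subtype.ext (congrArg Prod.snd (@injOn_coloring _ _ _ _ (c l, l.1)
      ⟨l.2.1, hc l⟩ (c l', l'.1) ⟨l'.2.1, hc l'⟩ (Prod.ext h.1 (congrArg Subtype.val h.2))))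
  calc _ ≤ Nat.card ((ι → Fin k) × List.Vector (Fin k) (Fintype.card ι)) :=
        Nat.card_le_card_of_injective code hcode
    _ = (k ^ 2) ^ Fintype.card ι := by
        rw [Nat.card_eq_fintype_card, Fintype.card_prod, card_vector, Fintype.card_fun,
          Fintype.card_fin, ← mul_pow, sq]

end Counting

theorem finite_setOf_perm {ι : Type*} (l₀ : List ι) : {l : List ι | l.Perm l₀}.Finite := by
  classical
  exact (List.finite_toSet l₀.permutations).subset fun l hl ↦ List.mem_permutations.mpr hl

/-- **Regev's codimension bound**. -/
theorem IsMultilinearIdentity.finrank_le {F B ι : Type*} [Field F] [Ring B] [Algebra F B]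
    [Fintype ι] {k : ℕ} {α : Equiv.Perm (Fin k) → F} (h : IsMultilinearIdentity B α)
    (hα : α 1 ≠ 0) (X : ι → B) :
    ((fun l ↦ (l.map X).prod) '' {l : List ι | l.Perm Finset.univ.toList}).finrank F ≤
      (k ^ 2) ^ Fintype.card ι := by
  let _ : LinearOrder ι :=
    LinearOrder.lift' (Fintype.equivFin ι) (Fintype.equivFin ι).injective
  let good : Set (List ι) := {l | l.Perm Finset.univ.toList ∧ AvoidsDecreasing k l}
  let word (l : List ι) : B := (l.map X).prod
  have hgood : good.Finite := (finite_setOf_perm _).subset fun l hl ↦ hl.1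
  have hspan : Submodule.span F (word '' {l | l.Perm Finset.univ.toList}) ≤
      Submodule.span F (word '' good) := by
    refine Submodule.span_le.mpr ?_
    rintro _ ⟨l, hl, rfl⟩
    refine Submodule.span_mono (Set.image_mono ?_) (h.prod_map_mem_span hα X l)
    exact fun l' hl' ↦ ⟨hl'.1.trans hl, hl'.2⟩
  have := Module.Finite.span_of_finite F (hgood.image word)
  have := (hgood.image word).fintype
  calc _ ≤ (word '' good).finrank F := Submodule.finrank_mono hspan
    _ ≤ (word '' good).ncard := by
      rw [Set.ncard_eq_toFinset_card']
      exact finrank_span_le_card _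
    _ ≤ good.ncard := Set.ncard_image_le hgood
    _ ≤ (k ^ 2) ^ Fintype.card ι := ncard_avoidsDecreasing_le k

section Capelli

variable {F R : Type*} [CommRing F] [Ring R] [Algebra F R]

/-- The monomial `y₀ x₁ y₁ x₂ y₂ ⋯ x_m y_m` as a multilinear map in `x`. -/
noncomputable def capelliMonomial (F : Type*) {R : Type*} [CommRing F] [Ring R] [Algebra F R]
    {m : ℕ} (y : Fin (m + 1) → R) : MultilinearMap F (fun _ : Fin m ↦ R) R :=
  (LinearMap.mulLeft F (y 0)).compMultilinearMap
    ((MultilinearMap.mkPiAlgebraFin F m R).compLinearMap fun i ↦ LinearMap.mulRight F (y i.succ))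

theorem capelliMonomial_apply {m : ℕ} (y : Fin (m + 1) → R) (x : Fin m → R) :
    capelliMonomial F y x = y 0 * (List.ofFn fun i ↦ x i * y i.succ).prod :=
  rfl

/-- The Capelli polynomial `C_m` as an alternating map in `x`. -/
noncomputable def capelli (F : Type*) {R : Type*} [CommRing F] [Ring R] [Algebra F R]
    {m : ℕ} (y : Fin (m + 1) → R) : R [⋀^Fin m]→ₗ[F] R :=
  MultilinearMap.alternatization (capelliMonomial F y)

theorem capelli_apply (F : Type*) {R : Type*} [CommRing F] [Ring R] [Algebra F R]
    {m : ℕ} (y : Fin (m + 1) → R) (x : Fin m → R) :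
    capelli F y x = ∑ σ : Equiv.Perm (Fin m), Equiv.Perm.sign σ • capelliMonomial F y (x ∘ σ) := by
  rw [capelli, MultilinearMap.alternatization_apply]
  rfl

theorem map_capelli {S : Type*} [Ring S] [Algebra F S] (φ : R →ₐ[F] S) {m : ℕ}
    (y : Fin (m + 1) → R) (x : Fin m → R) :
    φ (capelli F y x) = capelli F (φ ∘ y) (φ ∘ x) := by
  simp [capelli_apply, capelliMonomial_apply, map_list_prod, List.map_ofFn, Function.comp_def,
    Units.smul_def]

theorem exists_sum_eq_sum_sum_mul {G K M : Type*} [Group G] [Group K] [Fintype G] [Fintype K]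
    [AddCommMonoid M] {φ : K →* G} (hφ : Function.Injective φ) :
    ∃ T : Finset G, ∀ g : G → M, ∑ σ, g σ = ∑ s ∈ T, ∑ τ, g (φ τ * s) := by
  classical
  obtain ⟨T, hT, -⟩ := Subgroup.exists_isComplement_right φ.range 1
  refine ⟨T.toFinset, fun g ↦ ?_⟩
  have hbij := hT.comp
    ((Equiv.ofInjective φ hφ).bijective.prodMap (Function.bijective_id (α := T)))
  rw [← hbij.sum_comp g, Fintype.sum_prod_type_right, Finset.sum_subtype _ fun _ ↦ Set.mem_toFinset]
  rfl

theorem exists_prod_map_extend_eq {κ ι M : Type*} [Monoid M] {e : κ → ι}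
    (he : Function.Injective e) (v : ι → M) (l : List (ι × M)) :
    ∃ (w₀ : M) (P : List (κ × M)),
      P.map Prod.fst = l.filterMap (fun p ↦ Function.partialInv e p.1) ∧
      ∀ u : κ → M, (l.map fun p ↦ Function.extend e u v p.1 * p.2).prod =
        w₀ * (P.map fun p ↦ u p.1 * p.2).prod := by
  induction l with
  | nil => exact ⟨1, [], rfl, by simp⟩
  | cons p l ih =>
    obtain ⟨w₀, P, hP, hprod⟩ := ih
    obtain ⟨i, b⟩ := p
    by_cases hi : ∃ j, e j = i
    · obtain ⟨j, rfl⟩ := hi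
      refine ⟨1, (j, b * w₀) :: P, ?_, fun u ↦ ?_⟩
      · simp [hP, Function.partialInv_left he]
      · simp [hprod, he.extend_apply, mul_assoc]
    · refine ⟨v i * b * w₀, P, ?_, fun u ↦ ?_⟩
      · simp [hP, Function.partialInv, hi]
      · simp [hprod, Function.extend_apply' _ _ _ hi, mul_assoc]

theorem exists_capelliMonomial_extend_eq {d m : ℕ} (y : Fin (m + 1) → R) (e : Fin d ↪ Fin m)
    (v : Fin m → R) (s : Equiv.Perm (Fin m)) :
    ∃ (y' : Fin (d + 1) → R) (π : Equiv.Perm (Fin d)), ∀ u : Fin d → R,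
      capelliMonomial F y (Function.extend e u v ∘ s) = capelliMonomial F y' (u ∘ π) := by
  obtain ⟨w₀, P, hP, hprod⟩ := exists_prod_map_extend_eq e.injective v
    (List.ofFn fun i ↦ (s i, y i.succ))
  have hinv {i j} : Function.partialInv e i = some j ↔ e j = i :=
    e.injective.isPartialInv j i
  have hperm : (P.map Prod.fst).Perm (List.finRange d) := by
    refine (List.perm_ext_iff_of_nodup ?_ (List.nodup_finRange d)).mpr fun j ↦ ?_
    · rw [hP, List.ofFn_eq_map, List.filterMap_map]
      refine (List.nodup_finRange m).filterMap fun i i' j hi hi' ↦ s.injective ?_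
      exact (hinv.mp hi).symm.trans (hinv.mp hi')
    · have hj : ∃ i, e j = s i := ⟨s.symm (e j), by simp⟩
      simpa [hP, hinv, List.mem_filterMap, List.mem_ofFn] using hj
  obtain ⟨p, rfl⟩ : ∃ p : Fin d → Fin d × R, P = List.ofFn p := by
    have hd : P.length = d := by simpa using hperm.length_eq
    exact ⟨P.get ∘ Fin.cast hd.symm, List.ext_get (by simp [hd]) (by simp)⟩
  rw [List.map_ofFn] at hperm
  have hinj : Function.Injective (Prod.fst ∘ p) :=
    List.nodup_ofFn.mp (hperm.nodup_iff.mpr (List.nodup_finRange d))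
  refine ⟨Fin.cons (y 0 * w₀) fun j ↦ (p j).2,
    Equiv.ofBijective _ (Finite.injective_iff_bijective.mp hinj), fun u ↦ ?_⟩
  specialize hprod u
  simp only [List.map_ofFn] at hprod
  simp only [capelliMonomial_apply, Fin.cons_zero, Fin.cons_succ, mul_assoc]
  exact congrArg (y 0 * ·) hprod

theorem extend_comp_perm {κ ι M : Type*} [Fintype κ] [DecidableEq ι] (e : κ ↪ ι)
    (τ : Equiv.Perm κ) (u : κ → M) (v : ι → M) :
    Function.extend e (u ∘ τ) v = Function.extend e u v ∘ τ.viaFintypeEmbedding e := by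
  funext i
  by_cases hi : i ∈ Set.range e
  · obtain ⟨j, rfl⟩ := hi
    simp [e.injective.extend_apply]
  · simp [Function.extend_apply' _ _ _ hi, τ.viaFintypeEmbedding_apply_notMem_range e hi]

-- Group the permutations of all `m` arguments by cosets of those moving only the arguments in the
-- range of `e`.
theorem exists_capelli_extend_eq_sum {d m : ℕ} (y : Fin (m + 1) → R) (e : Fin d ↪ Fin m)
    (v : Fin m → R) :
    ∃ (T : Finset (Equiv.Perm (Fin m))) (ε : Equiv.Perm (Fin m) → ℤˣ)
      (y' : Equiv.Perm (Fin m) → Fin (d + 1) → R), ∀ u : Fin d → R,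
      capelli F y (Function.extend e u v) = ∑ s ∈ T, ε s • capelli F (y' s) u := by
  obtain ⟨T, hT⟩ := exists_sum_eq_sum_sum_mul (M := R)
    (Equiv.Perm.extendDomainHom_injective e.toEquivRange)
  choose y' π hπ using exists_capelliMonomial_extend_eq (F := F) y e v
  refine ⟨T, fun s ↦ Equiv.Perm.sign s * Equiv.Perm.sign (π s), y', fun u ↦ ?_⟩
  have hreindex (s) : capelli F (y' s) u =
      ∑ τ : Equiv.Perm (Fin d),
        Equiv.Perm.sign (τ * π s) • capelliMonomial F (y' s) ((u ∘ τ) ∘ π s) := by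
    rw [capelli_apply]
    exact (Equiv.sum_comp (Equiv.mulRight (π s)) _).symm
  simp only [capelli_apply F y, hT, hreindex, Finset.smul_sum]
  refine Finset.sum_congr rfl fun s _ ↦ Finset.sum_congr rfl fun τ _ ↦ ?_
  change Equiv.Perm.sign (τ.viaFintypeEmbedding e * s) •
    capelliMonomial F y ((Function.extend e u v ∘ τ.viaFintypeEmbedding e) ∘ s) = _
  rw [← extend_comp_perm, hπ, smul_smul]
  congr 1
  simp only [Equiv.Perm.sign_mul, Equiv.Perm.viaFintypeEmbedding_sign]
  rw [mul_mul_mul_comm, Int.units_mul_self, mul_one, mul_comm]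

end Capelli

section Exchange

variable {F R : Type*} [CommRing F] [Ring R] [Algebra F R]

/-- The algebra `R` satisfies the identity `∑ ρ, c ρ • C_d(h₁ t_{ρ(1)}, …, h_d t_{ρ(d)}; y) = 0`,
which relates the ways of exchanging the right factors of the arguments of the Capelli
polynomial. -/
def IsExchangeIdentity {F : Type*} (R : Type*) [CommRing F] [Ring R] [Algebra F R] {d : ℕ}
    (c : Equiv.Perm (Fin d) → F) : Prop :=
  ∀ (y : Fin (d + 1) → R) (h t : Fin d → R),
    ∑ ρ, c ρ • capelli F y (fun i ↦ h i * t (ρ i)) = 0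

theorem IsExchangeIdentity.comp_mulLeft {d : ℕ} {c : Equiv.Perm (Fin d) → F}
    (hc : IsExchangeIdentity R c) (ρ₀ : Equiv.Perm (Fin d)) :
    IsExchangeIdentity R (fun ρ ↦ c (ρ₀ * ρ)) := by
  intro y h t
  have := hc y h (t ∘ ρ₀.symm)
  rw [← Equiv.sum_comp (Equiv.mulLeft ρ₀)] at this
  simpa using this

theorem IsExchangeIdentity.sum_smul_capelli_extend {d : ℕ} {c : Equiv.Perm (Fin d) → F}
    (hc : IsExchangeIdentity R c) {m : ℕ} (y : Fin (m + 1) → R) (e : Fin d ↪ Fin m)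
    (v : Fin m → R) (h t : Fin d → R) :
    ∑ ρ, c ρ • capelli F y (Function.extend e (fun i ↦ h i * t (ρ i)) v) = 0 := by
  obtain ⟨T, ε, y', hT⟩ := exists_capelli_extend_eq_sum (F := F) y e v
  simp only [hT, Finset.smul_sum, smul_comm (c _)]
  rw [Finset.sum_comm]
  refine Finset.sum_eq_zero fun s _ ↦ ?_
  rw [← Finset.smul_sum, hc, smul_zero]

/-- The word `y₀ h_{τ(1)} t_{ρ(τ(1))} y₁ ⋯ h_{τ(d)} t_{ρ(τ(d))} y_d` in the letters `h₁, …, h_d`,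
`t₁, …, t_d`, `y₀, …, y_d`, in this order of the summands. -/
def exchangeWord {d : ℕ} (ρ τ : Equiv.Perm (Fin d)) : List (Fin d ⊕ Fin d ⊕ Fin (d + 1)) :=
  .inr (.inr 0) :: (List.finRange d).flatMap fun j ↦
    [.inl (τ j), .inr (.inl (ρ (τ j))), .inr (.inr j.succ)]

theorem exchangeWord_perm {d : ℕ} (ρ τ : Equiv.Perm (Fin d)) :
    (exchangeWord ρ τ).Perm Finset.univ.toList := by
  refine (List.Subperm.perm_of_length_le (List.subperm_of_subset (Finset.nodup_toList _) ?_)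
    ?_).symm
  · rintro (i | i | i) -
    · simpa [exchangeWord] using ⟨τ.symm i, by simp⟩
    · simpa [exchangeWord] using ⟨τ.symm (ρ.symm i), by simp⟩
    · cases i using Fin.cases <;> simp [exchangeWord]
  · simp [exchangeWord, List.length_flatMap]
    omega

theorem prod_map_exchangeWord {d : ℕ} (ρ τ : Equiv.Perm (Fin d))
    (X : Fin d ⊕ Fin d ⊕ Fin (d + 1) → R) :
    ((exchangeWord ρ τ).map X).prod = capelliMonomial F (fun j ↦ X (.inr (.inr j)))
      ((fun i ↦ X (.inl i) * X (.inr (.inl (ρ i)))) ∘ τ) := by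
  simp [exchangeWord, capelliMonomial_apply, List.flatMap, List.map_flatten, List.prod_flatten,
    Function.comp_def, List.ofFn_eq_map, mul_assoc]

theorem IsMultilinearIdentity.finrank_capelli_le {F B : Type*} [Field F] [Ring B] [Algebra F B]
    {k : ℕ} {α : Equiv.Perm (Fin k) → F} (hα : α 1 ≠ 0) (hB : IsMultilinearIdentity B α) {d : ℕ}
    (y : Fin (d + 1) → B) (h t : Fin d → B) :
    (Set.range fun ρ : Equiv.Perm (Fin d) ↦ capelli F y fun i ↦ h i * t (ρ i)).finrank F ≤
      (k ^ 2) ^ (d + (d + (d + 1))) := by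
  let X := Sum.elim h (Sum.elim t y)
  have := Module.Finite.span_of_finite F
    ((finite_setOf_perm Finset.univ.toList).image fun l ↦ (l.map X).prod)
  refine (Submodule.finrank_mono (Submodule.span_le.mpr ?_)).trans
    ((hB.finrank_le hα X).trans_eq (by simp))
  rintro _ ⟨ρ, rfl⟩
  change capelli F y (fun i ↦ h i * t (ρ i)) ∈ Submodule.span F _
  rw [capelli_apply]
  refine Submodule.sum_mem _ fun τ _ ↦ zsmul_mem (Submodule.subset_span ?_) _
  exact ⟨exchangeWord ρ τ, exchangeWord_perm ρ τ, prod_map_exchangeWord ρ τ X⟩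

theorem IsMultilinearIdentity.exists_isExchangeIdentity {F R : Type*} [Field F] [Ring R]
    [Algebra F R] {k : ℕ} {α : Equiv.Perm (Fin k) → F} (hα : α 1 ≠ 0)
    (hR : IsMultilinearIdentity R α) :
    ∃ (d : ℕ) (c : Equiv.Perm (Fin d) → F), c 1 ≠ 0 ∧ IsExchangeIdentity R c := by
  obtain ⟨d, hd⟩ := (Nat.eventually_mul_pow_lt_factorial_sub (k ^ 2) ((k ^ 2) ^ 3) 0).exists
  let A := Fin d ⊕ Fin d ⊕ Fin (d + 1) → R
  let M (ρ : Equiv.Perm (Fin d)) : A → R :=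
    capelli F (fun j z ↦ z (.inr (.inr j))) fun i z ↦ z (.inl i) * z (.inr (.inl (ρ i)))
  have hrank : (Set.range M).finrank F < Fintype.card (Equiv.Perm (Fin d)) :=
    calc
      _ ≤ (k ^ 2) ^ (d + (d + (d + 1))) := (hR.pi A).finrank_capelli_le hα
        (fun j z ↦ z (.inr (.inr j))) (fun i z ↦ z (.inl i)) (fun i z ↦ z (.inr (.inl i)))
      _ = k ^ 2 * ((k ^ 2) ^ 3) ^ d := by ring
      _ < Fintype.card (Equiv.Perm (Fin d)) := by simpa [Fintype.card_perm] using hd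
  have hdep : ¬ LinearIndependent F M := by
    rw [linearIndependent_iff_card_le_finrank_span]
    exact hrank.not_ge
  obtain ⟨c, hsum, ρ₀, hρ₀⟩ := Fintype.not_linearIndependent_iff.mp hdep
  have hc : IsExchangeIdentity R c := by
    intro y h t
    let eval : (A → R) →ₐ[F] R := Pi.evalAlgHom F _ (Sum.elim h (Sum.elim t y))
    simpa [M, eval, map_capelli, Function.comp_def] using congrArg eval hsum
  exact ⟨d, _, by simpa using hρ₀, hc.comp_mulLeft ρ₀⟩

end Exchange

section Words

theorem sum_add_sq_lt_sum_add_comp_perm_sq {κ : Type*} [Fintype κ] [LinearOrder κ] {a b : κ → ℕ}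
    (ha : StrictMono a) (hb : StrictAnti b) {ρ : Equiv.Perm κ} (hρ : ρ ≠ 1) :
    ∑ i, (a i + b i) ^ 2 < ∑ i, (a i + b (ρ i)) ^ 2 := by
  have hanti : Antivary a b := fun i j hij ↦ ha.monotone (hb.lt_iff_gt.mp hij).le
  have hnot : ¬ Antivary a (b ∘ ρ) := by
    intro h
    have hmono : Monotone ρ := fun i j hij ↦ by
      by_contra! hlt
      exact (ha (lt_of_le_of_ne hij (by rintro rfl; exact hlt.false))).not_ge (h (hb hlt))
    have hid : ⇑ρ = id :=
      ((hmono.strictMono_of_injective ρ.injective).range_inj strictMono_id).mp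
        (by simp [ρ.surjective.range_eq])
    exact hρ (Equiv.ext (congrFun hid))
  have hmul := hanti.sum_mul_lt_sum_mul_comp_perm_iff.mpr hnot
  have hsq : ∑ i, b (ρ i) ^ 2 = ∑ i, b i ^ 2 := Equiv.sum_comp ρ (fun i ↦ b i ^ 2)
  simp only [smul_eq_mul] at hmul
  simp only [add_sq, Finset.sum_add_distrib, mul_assoc, ← Finset.mul_sum]
  omega

theorem exists_embedding_monotone_comp {ι α : Type*} [LinearOrder α] {d : ℕ} {s : Finset ι}
    (hs : d ≤ s.card) (f : ι → α) :
    ∃ e : Fin d ↪ ι, (∀ i, e i ∈ s) ∧ Monotone (f ∘ e) := by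
  obtain ⟨e, he⟩ := Function.Embedding.exists_of_card_le_finset (α := Fin d) (s := s) (by simpa)
  exact ⟨(Tuple.sort (f ∘ e)).toEmbedding.trans e, fun i ↦ he ⟨_, rfl⟩,
    Tuple.monotone_sort (f ∘ e)⟩

-- After sorting the long words by length, cut off tails of lengths `d - 1, …, 1, 0`.
theorem exists_append_strictMono_strictAnti_length {ι S : Type*} [Fintype ι] {d : ℕ}
    {w : ι → List S} (hw : d ≤ Finset.card {i | d ≤ (w i).length}) :
    ∃ (e : Fin d ↪ ι) (h t : Fin d → List S), (∀ i, w (e i) = h i ++ t i) ∧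
      StrictMono (fun i ↦ (h i).length) ∧ StrictAnti (fun i ↦ (t i).length) := by
  obtain ⟨e, hlong, hmono⟩ := exists_embedding_monotone_comp hw fun i ↦ (w i).length
  simp only [Finset.mem_filter_univ] at hlong
  refine ⟨e, fun i ↦ (w (e i)).take ((w (e i)).length - (d - 1 - i)),
    fun i ↦ (w (e i)).drop ((w (e i)).length - (d - 1 - i)), fun i ↦ by simp, ?_, ?_⟩
  · intro i j hij
    have : (w (e i)).length ≤ (w (e j)).length := hmono hij.le
    have := hlong i
    simp only [List.length_take]
    omega
  · intro i j hij
    have := hlong i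
    have := hlong j
    simp only [List.length_drop]
    omega

theorem sum_extend {κ ι α M : Type*} [Fintype κ] [Fintype ι] [DecidableEq ι] [AddCommMonoid M]
    (f : α → M) (e : κ ↪ ι) (u : κ → α) (w : ι → α) :
    ∑ i, f (Function.extend e u w i) =
      ∑ j, f (u j) + ∑ i ∈ (Finset.univ.map e)ᶜ, f (w i) := by
  rw [← Finset.sum_add_sum_compl (Finset.univ.map e), Finset.sum_map]
  congr 1
  · simp only [e.injective.extend_apply]
  · refine Finset.sum_congr rfl fun i hi ↦ ?_
    rw [Function.extend_apply' _ _ _ (by simpa using hi)]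

theorem extend_comp_self {κ ι α : Type*} {e : κ → ι} (he : Function.Injective e) (w : ι → α) :
    Function.extend e (w ∘ e) w = w := by
  funext i
  by_cases hi : ∃ j, e j = i
  · obtain ⟨j, rfl⟩ := hi
    simp [he.extend_apply]
  · exact Function.extend_apply' _ _ _ hi

/-- The defect `(∑ i, |w i|)² - ∑ i, |w i|²` of a tuple of words, which measures how far the letters
are from being concentrated in a single word. The subtraction is never truncated. -/
def lengthDefect {ι S : Type*} [Fintype ι] (w : ι → List S) : ℕ :=
  (∑ i, (w i).length) ^ 2 - ∑ i, (w i).length ^ 2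

theorem lengthDefect_extend_append_lt {κ ι S : Type*} [Finite κ] [LinearOrder κ] [Fintype ι]
    (e : κ ↪ ι) {h t : κ → List S} (hh : StrictMono fun i ↦ (h i).length)
    (ht : StrictAnti fun i ↦ (t i).length) (w : ι → List S) {ρ : Equiv.Perm κ} (hρ : ρ ≠ 1) :
    lengthDefect (Function.extend e (fun i ↦ h i ++ t (ρ i)) w) <
      lengthDefect (Function.extend e (fun i ↦ h i ++ t i) w) := by
  classical
  have := Fintype.ofFinite κ
  have hsum (ρ : Equiv.Perm κ) : ∑ i, (t (ρ i)).length = ∑ i, (t i).length :=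
    Equiv.sum_comp ρ fun i ↦ (t i).length
  have hsq := sum_add_sq_lt_sum_add_comp_perm_sq hh ht hρ
  have hle : ∑ i, (Function.extend e (fun i ↦ h i ++ t (ρ i)) w i).length ^ 2 ≤
      (∑ i, (Function.extend e (fun i ↦ h i ++ t (ρ i)) w i).length) ^ 2 :=
    Finset.sum_sq_le_sq_sum_of_nonneg fun _ _ ↦ Nat.zero_le _
  simp only [lengthDefect, sum_extend List.length, sum_extend fun l ↦ List.length l ^ 2,
    List.length_append, Finset.sum_add_distrib, hsum] at hle ⊢
  omega

theorem exists_ne_eq_of_card_lt {S : Type*} [Finite S] {d m : ℕ}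
    (hm : {l : List S | l.length < d}.ncard + d ≤ m) {w : Fin m → List S}
    (hw : Finset.card {i | d ≤ (w i).length} < d) : ∃ i j, i ≠ j ∧ w i = w j := by
  have hcard := Finset.card_filter_add_card_filter_not (s := Finset.univ)
    fun i ↦ d ≤ (w i).length
  rw [Finset.card_fin] at hcard
  have hlt : {l : List S | l.length < d}.ncard < Set.ncard {i | ¬ d ≤ (w i).length} := by
    rw [Set.ncard_eq_toFinset_card' {i | ¬ d ≤ (w i).length}, Set.toFinset_ofPred]
    omega
  obtain ⟨i, -, j, -, hij, h⟩ := Set.exists_ne_map_eq_of_ncard_lt_of_maps_to hlt (f := w)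
    (fun i hi ↦ not_le.mp hi) (List.finite_length_lt S d)
  exact ⟨i, j, hij, h⟩

variable {F R S : Type*} [Field F] [Ring R] [Algebra F R] {d m : ℕ} {c : Equiv.Perm (Fin d) → F}

theorem IsExchangeIdentity.capelli_prod_map_eq_zero [Finite S] (hc : IsExchangeIdentity R c)
    (hc₁ : c 1 ≠ 0) (X : S → R) (hm : {l : List S | l.length < d}.ncard + d ≤ m)
    (y : Fin (m + 1) → R) (w : Fin m → List S) :
    capelli F y (fun i ↦ ((w i).map X).prod) = 0 := by
  induction hn : lengthDefect w using Nat.strong_induction_on generalizing w with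
  | _ n ih =>
  obtain hlt | hlong := lt_or_ge (Finset.card {i | d ≤ (w i).length}) d
  · obtain ⟨i, j, hij, hw⟩ := exists_ne_eq_of_card_lt hm hlt
    exact (capelli F y).map_eq_zero_of_eq _ (by simp only [hw]) hij
  obtain ⟨e, h, t, hw, hh, ht⟩ := exists_append_strictMono_strictAnti_length hlong
  let swap (ρ : Equiv.Perm (Fin d)) := Function.extend e (fun i ↦ h i ++ t (ρ i)) w
  have hswap : swap 1 = w := by
    simpa [swap, ← hw, Function.comp_def] using extend_comp_self e.injective w
  have hsum : ∑ ρ, c ρ • capelli F y (fun i ↦ ((swap ρ i).map X).prod) = 0 := by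
    have := hc.sum_smul_capelli_extend y e (fun i ↦ ((w i).map X).prod)
      (fun i ↦ ((h i).map X).prod) fun i ↦ ((t i).map X).prod
    simp only [swap, Function.apply_extend (fun l : List S ↦ (l.map X).prod)]
    simpa [Function.comp_def] using this
  have hmem := mem_of_sum_smul_mem (N := ⊥) hc₁ ((Submodule.mem_bot F).mpr hsum) fun ρ hρ ↦ ?_
  · simpa [hswap] using hmem
  · refine (Submodule.mem_bot F).mpr (ih _ ?_ _ rfl)
    rw [← hn, ← hswap]
    exact lengthDefect_extend_append_lt e hh ht w hρ

end Words

theorem span_range_prod_map_eq_top {F R : Type*} [CommSemiring F] [Semiring R] [Algebra F R]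
    {s : Set R} (hs : Algebra.adjoin F s = ⊤) :
    Submodule.span F (Set.range fun l : List s ↦ (l.map Subtype.val).prod) = ⊤ := by
  rw [← Algebra.top_toSubmodule, ← hs, Algebra.adjoin_eq_span]
  congr 1
  conv_rhs => rw [← Subtype.range_coe (s := s), ← FreeMonoid.mrange_lift, MonoidHom.coe_mrange]
  exact congrArg Set.range (funext fun l ↦ (FreeMonoid.lift_apply Subtype.val l).symm)

theorem kemer_capelli_general {F R X : Type*} [Field F] [Ring R] [Algebra F R]
    (hfg : Algebra.FiniteType F R)
    (hPI : ∃ f : FreeAlgebra F X, f ≠ 0 ∧ ∀ a : X → R, FreeAlgebra.lift F a f = 0) :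
    ∃ m : ℕ, 1 ≤ m ∧ ∀ (y : Fin (m + 1) → R) (x : Fin m → R),
      ∑ σ : Equiv.Perm (Fin m), ((Equiv.Perm.sign σ : ℤˣ) : ℤ) •
        (y 0 * (List.ofFn fun i : Fin m ↦ x (σ i) * y i.succ).prod) = 0 := by
  obtain ⟨f, hf, hR⟩ := hPI
  obtain ⟨k, α, hα, hmul⟩ := exists_isMultilinearIdentity hf hR
  obtain ⟨d, c, hc₁, hc⟩ := hmul.exists_isExchangeIdentity hα
  obtain ⟨s, hs⟩ := hfg.out
  refine ⟨{l : List s | l.length < d}.ncard + d + 1, Nat.le_add_left 1 _, fun y x ↦ ?_⟩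
  have hcapelli : (capelli F y).toMultilinearMap = 0 :=
    MultilinearMap.ext_of_span_eq_top (fun _ ↦ span_range_prod_map_eq_top hs)
      (hc.capelli_prod_map_eq_zero hc₁ Subtype.val (Nat.le_succ _) y)
  exact (capelli_apply F y x).symm.trans (congrArg (· x) hcapelli)

/-- **Kemer: every finitely generated PI algebra satisfies a Capelli identity.**
If `F` has characteristic `0` and `R` is a finitely generated `F`-algebra satisfying a
nonzero polynomial identity, then there is `m ≥ 1` such that `R` satisfies the Capelli
identity `C_m`: for all `y₀, …, y_m, x₁, …, x_m ∈ R`,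
`∑ σ ∈ S_m, sgn σ • y₀ x_{σ(1)} y₁ x_{σ(2)} ⋯ y_{m-1} x_{σ(m)} y_m = 0`. -/
theorem kemer_capelli (F : Type) [Field F] [CharZero F]
    (R : Type) [Ring R] [Algebra F R] (hfg : Algebra.FiniteType F R)
    (hPI : ∃ f : FreeAlgebra F ℕ, f ≠ 0 ∧ ∀ a : ℕ → R, (FreeAlgebra.lift F a) f = 0) :
    ∃ m : ℕ, 1 ≤ m ∧ ∀ (y : Fin (m + 1) → R) (x : Fin m → R),
      ∑ σ : Equiv.Perm (Fin m),
        ((Equiv.Perm.sign σ : ℤˣ) : ℤ) •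
          (y 0 * (List.ofFn fun i : Fin m => x (σ i) * y i.succ).prod) = 0 :=
  kemer_capelli_general hfg hPI
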